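/- Let X be an infinite separable locally compact metric space and let f : X → X be a continuous weakly mixing map. Suppose x₀ ∈ X is a point whose orbit O_f(x₀) has compact closure. Let s ≥ 0 be an integer and let 𝒢 be a family of open subsets of X covering the closure of O_f(x₀). Then there exists a member G_s ∈ 𝒢 such that: for every n ≥ 1, all compact sets K₁, …, Kₙ ⊆ X with nonempty interiors, and all nonempty open sets V₁, …, Vₙ ⊆ X, there exist infinitely many positive integers k such that for each such k and each 1 ≤ j ≤ n there is a compact set K_{k,j} ⊆ K_j with nonempty interior satisfying f^{k+s}(K_{k,j}) ⊆ V_j and fᵏ(x₀) ∈ G_s. -/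

import Mathlib

/-- `f` is (topologically) weakly mixing. -/
def WeaklyMixing {X : Type*} [TopologicalSpace X] (f : X → X) : Prop :=
  ∀ U₁ U₂ V₁ V₂ : Set X, IsOpen U₁ → IsOpen U₂ → IsOpen V₁ → IsOpen V₂ →
    U₁.Nonempty → U₂.Nonempty → V₁.Nonempty → V₂.Nonempty →
    ∃ n : ℕ, 1 ≤ n ∧ (f^[n] '' U₁ ∩ V₁).Nonempty ∧ (f^[n] '' U₂ ∩ V₂).Nonempty

/-- The orbit of `x₀` under `f`. -/
def Orbit {X : Type*} (f : X → X) (x₀ : X) : Set X :=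
  Set.range fun i : ℕ => f^[i] x₀

/-!
For a weakly mixing continuous map the hitting time sets `N(U, V)` of nonempty open sets are
downward directed: if `n` witnesses weak mixing for `U₁, U₂, V₁, V₂`, then any `k` at which
`U₁ ∩ f⁻ⁿ U₂` hits `V₁ ∩ f⁻ⁿ V₂` lies in both `N(U₁, V₁)` and `N(U₂, V₂)` (Furstenberg). They are
also unbounded, so together with the tails of `ℕ` they generate a proper filter. Along this filter
the sequence `fᵏ(x₀)`, which stays in a compact set, has a cluster point, and any `G` containing it
works: `fᵏ(x₀) ∈ G` holds frequently, while hitting finitely many prescribed pairs holds eventually.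
The shift by `s` replaces each `V` by `f⁻ˢ V`, which is nonempty because `f` has dense range.
-/

open Filter Topology

section HittingTimes

variable {X : Type*} {f : X → X}

/-- The set `N(U, V)` of times `k` at which the `k`-th image of `U` meets `V`, including `k = 0`. -/
def hittingTimes (f : X → X) (U V : Set X) : Set ℕ :=
  {k | (f^[k] '' U ∩ V).Nonempty}

theorem mem_hittingTimes {U V : Set X} {k : ℕ} :
    k ∈ hittingTimes f U V ↔ ∃ x ∈ U, f^[k] x ∈ V :=
  Set.image_inter_nonempty_iff

theorem hittingTimes_mono {U U' V V' : Set X} (hU : U ⊆ U') (hV : V ⊆ V') :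
    hittingTimes f U V ⊆ hittingTimes f U' V' := fun _ hk =>
  hk.mono (Set.inter_subset_inter (Set.image_mono hU) hV)

theorem mem_hittingTimes_preimage_iterate {U V : Set X} {k m : ℕ} :
    k ∈ hittingTimes f U (f^[m] ⁻¹' V) ↔ k + m ∈ hittingTimes f U V := by
  simp only [mem_hittingTimes, Set.mem_preimage, ← Function.iterate_add_apply, add_comm m k]

theorem hittingTimes_preimage_preimage_subset (U V : Set X) (n : ℕ) :
    hittingTimes f (f^[n] ⁻¹' U) (f^[n] ⁻¹' V) ⊆ hittingTimes f U V := by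
  intro k hk
  obtain ⟨x, hxU, hxV⟩ := mem_hittingTimes.mp hk
  refine mem_hittingTimes.mpr ⟨f^[n] x, hxU, ?_⟩
  rwa [(Function.Commute.iterate_iterate_self f k n).eq x]

end HittingTimes

section Topology

variable {X Y : Type*} [TopologicalSpace X] [TopologicalSpace Y]

theorem denseRange_iterate {f : X → X} (hf : Continuous f) (hdense : DenseRange f) (n : ℕ) :
    DenseRange f^[n] := by
  induction n with
  | zero => exact denseRange_id
  | succ n ih => exact ih.comp hdense (hf.iterate n)

theorem exists_isCompact_subset_image_subset [LocallyCompactSpace X] {g : X → Y}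
    (hg : Continuous g) {U : Set X} {V : Set Y} (hU : IsOpen U) (hV : IsOpen V)
    (hUV : (g '' U ∩ V).Nonempty) :
    ∃ K, IsCompact K ∧ K ⊆ U ∧ (interior K).Nonempty ∧ g '' K ⊆ V := by
  obtain ⟨x, hx⟩ := Set.image_inter_nonempty_iff.mp hUV
  obtain ⟨K, hK, hxK, hKsub⟩ := exists_compact_subset (hU.inter (hV.preimage hg)) hx
  obtain ⟨hKU, hKV⟩ := Set.subset_inter_iff.mp hKsub
  exact ⟨K, hK, hKU, ⟨x, hxK⟩, Set.image_subset_iff.mpr hKV⟩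

/-- The filter on `ℕ` generated by the tails of `ℕ` and the hitting time sets of all pairs of
nonempty open sets; it is proper when `f` is continuous and weakly mixing. -/
def hittingFilter (f : X → X) : Filter ℕ :=
  atTop ⊓ ⨅ p ∈ {p : Set X × Set X | (IsOpen p.1 ∧ p.1.Nonempty) ∧ IsOpen p.2 ∧ p.2.Nonempty},
    𝓟 (hittingTimes f p.1 p.2)

theorem hittingFilter_le_atTop (f : X → X) : hittingFilter f ≤ atTop :=
  inf_le_left

theorem hittingTimes_mem_hittingFilter (f : X → X) {U V : Set X} (hU : IsOpen U)
    (hU' : U.Nonempty) (hV : IsOpen V) (hV' : V.Nonempty) :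
    hittingTimes f U V ∈ hittingFilter f :=
  mem_inf_of_right <| mem_iInf_of_mem (U, V) <| mem_iInf_of_mem ⟨⟨hU, hU'⟩, hV, hV'⟩ <|
    mem_principal_self _

namespace WeaklyMixing

variable {f : X → X}

theorem denseRange (hwm : WeaklyMixing f) : DenseRange f := by
  refine dense_iff_inter_open.mpr fun V hV hV' => ?_
  obtain ⟨n, hn, ⟨_, ⟨x, -, rfl⟩, hx⟩, -⟩ := hwm V V V V hV hV hV hV hV' hV' hV' hV'
  obtain ⟨m, rfl⟩ := Nat.exists_eq_add_of_le' hn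
  exact ⟨f^[m + 1] x, hx, f^[m] x, (Function.iterate_succ_apply' f m x).symm⟩

theorem nonempty_preimage_iterate (hf : Continuous f) (hwm : WeaklyMixing f) {V : Set X}
    (hV : IsOpen V) (hV' : V.Nonempty) (n : ℕ) : (f^[n] ⁻¹' V).Nonempty :=
  (denseRange_iterate hf hwm.denseRange n).exists_mem_open hV hV'

theorem exists_hittingTimes_subset_inter (hf : Continuous f) (hwm : WeaklyMixing f)
    {U₁ V₁ U₂ V₂ : Set X} (hU₁ : IsOpen U₁) (hU₁' : U₁.Nonempty) (hV₁ : IsOpen V₁)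
    (hV₁' : V₁.Nonempty) (hU₂ : IsOpen U₂) (hU₂' : U₂.Nonempty) (hV₂ : IsOpen V₂)
    (hV₂' : V₂.Nonempty) :
    ∃ A B : Set X, (IsOpen A ∧ A.Nonempty) ∧ (IsOpen B ∧ B.Nonempty) ∧
      hittingTimes f A B ⊆ hittingTimes f U₁ V₁ ∩ hittingTimes f U₂ V₂ := by
  obtain ⟨n, -, hUn, hVn⟩ := hwm U₁ V₁ U₂ V₂ hU₁ hV₁ hU₂ hV₂ hU₁' hV₁' hU₂' hV₂'
  refine ⟨U₁ ∩ f^[n] ⁻¹' U₂, V₁ ∩ f^[n] ⁻¹' V₂,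
    ⟨hU₁.inter (hU₂.preimage (hf.iterate n)), Set.image_inter_nonempty_iff.mp hUn⟩,
    ⟨hV₁.inter (hV₂.preimage (hf.iterate n)), Set.image_inter_nonempty_iff.mp hVn⟩,
    Set.subset_inter ?_ ?_⟩
  · exact hittingTimes_mono Set.inter_subset_left Set.inter_subset_left
  · exact (hittingTimes_mono Set.inter_subset_right Set.inter_subset_right).trans
      (hittingTimes_preimage_preimage_subset U₂ V₂ n)

theorem exists_ge_mem_hittingTimes (hf : Continuous f) (hwm : WeaklyMixing f) {U V : Set X}
    (hU : IsOpen U) (hU' : U.Nonempty) (hV : IsOpen V) (hV' : V.Nonempty) (N : ℕ) :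
    ∃ k ≥ N, k ∈ hittingTimes f U V := by
  have hW : IsOpen (f^[N] ⁻¹' V) := hV.preimage (hf.iterate N)
  have hW' : (f^[N] ⁻¹' V).Nonempty := hwm.nonempty_preimage_iterate hf hV hV' N
  obtain ⟨n, -, hn, -⟩ := hwm U U _ _ hU hU hW hW hU' hU' hW' hW'
  exact ⟨n + N, Nat.le_add_left N n, mem_hittingTimes_preimage_iterate.mp hn⟩

theorem neBot_hittingFilter [Nonempty X] (hf : Continuous f) (hwm : WeaklyMixing f) :
    (hittingFilter f).NeBot := by
  refine (atTop_basis.inf_basis_neBot_iff (hasBasis_biInf_principal ?directed ?nonempty)).mpr ?_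
  case directed =>
    rintro ⟨U₁, V₁⟩ ⟨⟨hU₁, hU₁'⟩, hV₁, hV₁'⟩ ⟨U₂, V₂⟩ ⟨⟨hU₂, hU₂'⟩, hV₂, hV₂'⟩
    obtain ⟨A, B, hA, hB, hAB⟩ :=
      hwm.exists_hittingTimes_subset_inter hf hU₁ hU₁' hV₁ hV₁' hU₂ hU₂' hV₂ hV₂'
    exact ⟨(A, B), ⟨hA, hB⟩, Set.subset_inter_iff.mp hAB⟩
  case nonempty =>
    exact ⟨(Set.univ, Set.univ), ⟨isOpen_univ, Set.univ_nonempty⟩, isOpen_univ, Set.univ_nonempty⟩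
  rintro N - ⟨U, V⟩ ⟨⟨hU, hU'⟩, hV, hV'⟩
  exact hwm.exists_ge_mem_hittingTimes hf hU hU' hV hV' N

theorem eventually_add_mem_hittingTimes (hf : Continuous f) (hwm : WeaklyMixing f) {U V : Set X}
    (hU : IsOpen U) (hU' : U.Nonempty) (hV : IsOpen V) (hV' : V.Nonempty) (s : ℕ) :
    ∀ᶠ k in hittingFilter f, k + s ∈ hittingTimes f U V := by
  have hmem : hittingTimes f U (f^[s] ⁻¹' V) ∈ hittingFilter f :=
    hittingTimes_mem_hittingFilter f hU hU' (hV.preimage (hf.iterate s))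
      (hwm.nonempty_preimage_iterate hf hV hV' s)
  filter_upwards [hmem] with k hk using mem_hittingTimes_preimage_iterate.mp hk

theorem eventually_exists_isCompact_image_subset [LocallyCompactSpace X] (hf : Continuous f)
    (hwm : WeaklyMixing f) {K V : Set X} (hK : (interior K).Nonempty) (hV : IsOpen V)
    (hV' : V.Nonempty) (s : ℕ) :
    ∀ᶠ k in hittingFilter f, ∃ K' : Set X,
      IsCompact K' ∧ K' ⊆ K ∧ (interior K').Nonempty ∧ f^[k + s] '' K' ⊆ V := by
  filter_upwards [hwm.eventually_add_mem_hittingTimes hf isOpen_interior hK hV hV' s] with k hk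
  obtain ⟨K', hK', hsub, hint, himage⟩ :=
    exists_isCompact_subset_image_subset (hf.iterate (k + s)) isOpen_interior hV hk
  exact ⟨K', hK', hsub.trans interior_subset, hint, himage⟩

end WeaklyMixing

end Topology

theorem good_cover_member_compact_refinement_general {X Y : Type*} [TopologicalSpace X]
    [Nonempty X] [LocallyCompactSpace X] [TopologicalSpace Y] {f : X → X} (hf : Continuous f)
    (hwm : WeaklyMixing f) {u : ℕ → Y} {S : Set Y} (hS : IsCompact S)
    (hu : ∀ᶠ k in atTop, u k ∈ S) {𝒢 : Set (Set Y)} (h𝒢open : ∀ G ∈ 𝒢, IsOpen G)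
    (h𝒢cover : S ⊆ ⋃₀ 𝒢) :
    ∃ G ∈ 𝒢, ∀ (s : ℕ) {ι : Type*} [Finite ι] (K V : ι → Set X),
      (∀ j, (interior (K j)).Nonempty) → (∀ j, IsOpen (V j)) → (∀ j, (V j).Nonempty) →
      ∃ᶠ k in atTop, u k ∈ G ∧ ∀ j, ∃ K' : Set X, IsCompact K' ∧ K' ⊆ K j ∧
        (interior K').Nonempty ∧ f^[k + s] '' K' ⊆ V j := by
  have := hwm.neBot_hittingFilter hf
  obtain ⟨y, hyS, hy⟩ : ∃ y ∈ S, MapClusterPt y (hittingFilter f) u :=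
    hS.exists_mapClusterPt_of_frequently (hu.filter_mono (hittingFilter_le_atTop f)).frequently
  obtain ⟨G, hG, hyG⟩ := h𝒢cover hyS
  have hfreq : ∃ᶠ k in hittingFilter f, u k ∈ G :=
    hy.frequently ((h𝒢open G hG).mem_nhds hyG)
  refine ⟨G, hG, fun s ι _ K V hK hV hV' => ?_⟩
  have hevent := eventually_all.mpr fun j =>
    hwm.eventually_exists_isCompact_image_subset hf (hK j) (hV j) (hV' j) s
  exact (hfreq.and_eventually hevent).filter_mono (hittingFilter_le_atTop f)

theorem good_cover_member_compact_refinement {X : Type*} [MetricSpace X] [Infinite X]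
    [TopologicalSpace.SeparableSpace X] [LocallyCompactSpace X]
    (f : X → X) (hf : Continuous f) (hwm : WeaklyMixing f)
    (x₀ : X) (horb : IsCompact (closure (Orbit f x₀)))
    (s : ℕ) (𝒢 : Set (Set X)) (h𝒢open : ∀ G ∈ 𝒢, IsOpen G)
    (h𝒢cover : closure (Orbit f x₀) ⊆ ⋃₀ 𝒢) :
    ∃ G ∈ 𝒢, ∀ n : ℕ, 1 ≤ n → ∀ K V : Fin n → Set X,
      (∀ j, IsCompact (K j)) → (∀ j, (interior (K j)).Nonempty) →
      (∀ j, IsOpen (V j)) → (∀ j, (V j).Nonempty) →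
      {k : ℕ | 1 ≤ k ∧ f^[k] x₀ ∈ G ∧ ∀ j : Fin n,
        ∃ K' : Set X, IsCompact K' ∧ K' ⊆ K j ∧ (interior K').Nonempty ∧
          f^[k + s] '' K' ⊆ V j}.Infinite := by
  have : Nonempty X := ⟨x₀⟩
  obtain ⟨G, hG, hfreq⟩ := good_cover_member_compact_refinement_general hf hwm horb
    (.of_forall fun k => subset_closure (Set.mem_range_self k)) h𝒢open h𝒢cover
  exact ⟨G, hG, fun n _ K V _ hK hV hV' => Nat.frequently_atTop_iff_infinite.mp
    ((eventually_ge_atTop 1).and_frequently (hfreq s K V hK hV hV'))⟩
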